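/- arXiv:2311.05045 — 4 statements merged into one kernel-verified Lean document; each statement's English description precedes it below -/
import Mathlib

section
/- Let k, n be positive integers with n ≥ 2, let A = I_k ⊗ e_nᵀ ∈ ℝ^{k×kn} and B = [−e_k A] ∈ ℝ^{k×(kn+1)}. For j = 1,…,n−1 set v_j = 1/√(j+j²) and v̄_j = j/√(j+j²). Let Ō ∈ ℝ^{n×(n−1)} be the matrix whose row 0 is (−v_1, …, −v_{n−1}) and whose entry in row i (1 ≤ i ≤ n−1), column j is v̄_j if j = i, −v_j if j > i, and 0 if j < i. Set β = −1/√(n² + nk) and α = nβ, and define V = [[0, α], [I_k ⊗ Ō, β e]] ∈ ℝ^{(nk+1)×((n−1)k+1)}, i.e., the first row of V is (0,…,0,α) and the remaining nk rows are [I_k ⊗ Ō β e_{nk}]. Then Vᵀ V = I and B V = 0. -/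
open Matrix

/-!
Column `j` of `Ō` is a positive multiple of the Helmert contrast `(-1, …, -1, m, 0, …, 0)` with
`m = j + 1` leading entries `-1`. A contrast annihilates every function that is constant on
`{0, …, m}`, in particular the all-ones vector and every later contrast, and its squared length is
`m + m²`; hence `Ō` has orthonormal columns, each with zero sum.

For any `O` with these two properties everything reduces to `A (I ⊗ O) = 0`: it gives the first
block column of `B V = 0`, and, because `eᵀ = eᵀ A`, also the orthogonality of the last column of
`V` to the others. The two remaining scalar identities are `α = n β` and `α² + k n β² = 1`.
-/

open scoped Kronecker

section Helmert

/-- The unnormalized Helmert contrast `(-1, …, -1, m, 0, …)`, as a function of the position `i`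
counted from `0`; the entry `m` stands in position `m`. -/
def helmertContrast (R : Type*) [Ring R] (m i : ℕ) : R :=
  if i < m then -1 else if i = m then (m : R) else 0

variable {R : Type*} [Ring R] {l m i n : ℕ}

lemma helmertContrast_of_lt (h : i < m) : helmertContrast R m i = -1 := if_pos h

lemma helmertContrast_self (m : ℕ) : helmertContrast R m m = m := by
  simp [helmertContrast]

lemma helmertContrast_of_gt (h : m < i) : helmertContrast R m i = 0 := by
  simp [helmertContrast, h.not_gt, h.ne']

lemma sum_helmertContrast_mul (hm : m < n) (f : ℕ → R) :
    ∑ i : Fin n, helmertContrast R m i * f i = m * f m - ∑ i ∈ Finset.range m, f i := by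
  have vanish : ∀ i ≥ m + 1, helmertContrast R m i * f i = 0 := fun i hi => by
    rw [helmertContrast_of_gt hi, zero_mul]
  have head : ∑ i ∈ Finset.range m, helmertContrast R m i * f i
      = -∑ i ∈ Finset.range m, f i := by
    rw [← Finset.sum_neg_distrib]
    refine Finset.sum_congr rfl fun i hi => ?_
    rw [helmertContrast_of_lt (Finset.mem_range.mp hi), neg_one_mul]
  rw [Fin.sum_univ_eq_sum_range fun i => helmertContrast R m i * f i,
    Finset.eventually_constant_sum vanish hm, Finset.sum_range_succ, head, helmertContrast_self,
    neg_add_eq_sub]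

lemma sum_helmertContrast_mul_eq_zero (hm : m < n) {f : ℕ → R} {c : R} (hf : ∀ i ≤ m, f i = c) :
    ∑ i : Fin n, helmertContrast R m i * f i = 0 := by
  have head : ∑ i ∈ Finset.range m, f i = m * c := by
    rw [Finset.sum_congr rfl fun i hi => hf i (Finset.mem_range.mp hi).le, Finset.sum_const,
      Finset.card_range, nsmul_eq_mul]
  rw [sum_helmertContrast_mul hm, hf m le_rfl, head, sub_self]

lemma sum_helmertContrast (hm : m < n) : ∑ i : Fin n, helmertContrast R m i = 0 := by
  simpa only [mul_one] using
    sum_helmertContrast_mul_eq_zero (R := R) hm (f := fun _ => 1) fun _ _ => rfl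

lemma sum_helmertContrast_mul_self (hm : m < n) :
    ∑ i : Fin n, helmertContrast R m i * helmertContrast R m i = m + (m : R) ^ 2 := by
  have head : ∑ i ∈ Finset.range m, helmertContrast R m i = -m := by
    rw [Finset.sum_congr rfl fun i hi => helmertContrast_of_lt (Finset.mem_range.mp hi),
      Finset.sum_const, Finset.card_range, nsmul_eq_mul, mul_neg_one]
  rw [sum_helmertContrast_mul hm, head, helmertContrast_self, sub_neg_eq_add, sq, add_comm]

lemma sum_helmertContrast_mul_of_lt (hm : m < n) (h : m < l) :
    ∑ i : Fin n, helmertContrast R m i * helmertContrast R l i = 0 :=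
  sum_helmertContrast_mul_eq_zero hm fun _ hi => helmertContrast_of_lt (hi.trans_lt h)

/-- The matrix `Ō`: its columns are the normalized Helmert contrasts on `n` points. Column `j`
carries the contrast `helmertContrast ℝ (j + 1)`. -/
noncomputable def helmertMatrix (n : ℕ) : Matrix (Fin n) (Fin (n - 1)) ℝ :=
  of fun i j => (√((j + 1 : ℕ) + (j + 1 : ℕ) ^ 2))⁻¹ * helmertContrast ℝ (j + 1) i

lemma one_vecMul_helmertMatrix (n : ℕ) : 1 ᵥ* helmertMatrix n = 0 := by
  ext j
  have hj : (j : ℕ) + 1 < n := by omega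
  simp only [vecMul, one_dotProduct, helmertMatrix, of_apply, Pi.zero_apply]
  rw [← Finset.mul_sum, sum_helmertContrast hj, mul_zero]

lemma helmertMatrix_transpose_mul_self (n : ℕ) : (helmertMatrix n)ᵀ * helmertMatrix n = 1 := by
  ext j l
  have hj : (j : ℕ) + 1 < n := by omega
  have hl : (l : ℕ) + 1 < n := by omega
  have gram : ((helmertMatrix n)ᵀ * helmertMatrix n) j l
      = (√((j + 1 : ℕ) + (j + 1 : ℕ) ^ 2))⁻¹ * (√((l + 1 : ℕ) + (l + 1 : ℕ) ^ 2))⁻¹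
        * ∑ i : Fin n, helmertContrast ℝ (j + 1) i * helmertContrast ℝ (l + 1) i := by
    rw [mul_apply, Finset.mul_sum]
    exact Finset.sum_congr rfl fun i _ => mul_mul_mul_comm _ _ _ _
  rw [gram]
  rcases lt_trichotomy j l with h | rfl | h
  · rw [sum_helmertContrast_mul_of_lt hj (Nat.succ_lt_succ h), mul_zero, one_apply_ne h.ne]
  · rw [sum_helmertContrast_mul_self hj, ← mul_inv, Real.mul_self_sqrt (by positivity),
      inv_mul_cancel₀ (by positivity), one_apply_eq]
  · simp_rw [mul_comm (helmertContrast ℝ (j + 1) _)]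
    rw [sum_helmertContrast_mul_of_lt hl (Nat.succ_lt_succ h), mul_zero, one_apply_ne h.ne']

end Helmert

section FacialMatrix

variable {κ ι μ ν R : Type*} [DecidableEq κ]

/-- The one-point-per-set constraint matrix `A = I_κ ⊗ e_ιᵀ`: row `s` is the indicator of the set
`{s} × ι`. -/
def onePointPerSet (κ ι R : Type*) [DecidableEq κ] [Zero R] [One R] : Matrix κ (κ × ι) R :=
  of fun s p => if p.1 = s then 1 else 0

/-- The matrix `V = [[0, α], [I_κ ⊗ O, β e]]` of the facial reduction, for an arbitrary block `O`
in place of `Ō`. -/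
def facialMatrix [MulZeroOneClass R] (κ : Type*) [DecidableEq κ] (O : Matrix ι μ R) (α β : R) :
    Matrix (Unit ⊕ κ × ι) (κ × μ ⊕ Unit) R :=
  fromBlocks 0 (replicateCol Unit fun _ => α)
    ((1 : Matrix κ κ R) ⊗ₖ O) (replicateCol Unit fun _ => β)

/-- The matrix `B = [-e  A]` of the constraint `A x = e` after homogenization, where
`A = onePointPerSet κ ι R`. -/
def homogenizedConstraint (κ ι R : Type*) [DecidableEq κ] [Ring R] :
    Matrix κ (Unit ⊕ κ × ι) R :=
  fromCols (replicateCol Unit (-1)) (onePointPerSet κ ι R)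

section NonAssocSemiring

variable [Fintype κ] [NonAssocSemiring R]

lemma const_vecMul_onePointPerSet (b : R) :
    (fun _ => b) ᵥ* onePointPerSet κ ι R = fun _ => b := by
  ext p
  simp [vecMul, dotProduct, onePointPerSet]

variable [Fintype ι] {O : Matrix ι μ R}

lemma onePointPerSet_mul_apply (M : Matrix (κ × ι) ν R) (s : κ) (c : ν) :
    (onePointPerSet κ ι R * M) s c = ∑ i, M (s, i) c := by
  simp only [onePointPerSet, mul_apply, of_apply, ite_mul, one_mul, zero_mul,
    Fintype.sum_prod_type_right, Finset.sum_ite_eq', Finset.mem_univ, if_true]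

lemma onePointPerSet_mul_one_kronecker (hsum : 1 ᵥ* O = 0) :
    onePointPerSet κ ι R * ((1 : Matrix κ κ R) ⊗ₖ O) = 0 := by
  ext s ⟨t, j⟩
  have column_sum : ∑ i, O i j = 0 := by
    simpa only [vecMul, one_dotProduct, Pi.zero_apply] using congrFun hsum j
  simp only [onePointPerSet_mul_apply, kronecker_apply]
  rw [← Finset.mul_sum, column_sum, mul_zero, Matrix.zero_apply]

end NonAssocSemiring

variable [Fintype κ] [Fintype ι]

lemma const_vecMul_one_kronecker [Semiring R] {O : Matrix ι μ R} (hsum : 1 ᵥ* O = 0) (b : R) :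
    (fun _ => b) ᵥ* ((1 : Matrix κ κ R) ⊗ₖ O) = 0 := by
  rw [← const_vecMul_onePointPerSet, vecMul_vecMul, onePointPerSet_mul_one_kronecker hsum,
    vecMul_zero]

lemma one_kronecker_transpose_mul_self [CommSemiring R] [DecidableEq μ] {O : Matrix ι μ R}
    (horth : Oᵀ * O = 1) :
    ((1 : Matrix κ κ R) ⊗ₖ O)ᵀ * ((1 : Matrix κ κ R) ⊗ₖ O) = 1 := by
  rw [← kroneckerMap_transpose, transpose_one, ← mul_kronecker_mul, Matrix.one_mul, horth,
    one_kronecker_one]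

theorem facialMatrix_transpose_mul_self [CommSemiring R] [DecidableEq μ] {O : Matrix ι μ R}
    (horth : Oᵀ * O = 1) (hsum : 1 ᵥ* O = 0) {α β : R}
    (hαβ : α ^ 2 + Fintype.card κ * Fintype.card ι * β ^ 2 = 1) :
    (facialMatrix κ O α β)ᵀ * facialMatrix κ O α β = 1 := by
  have row_mul : replicateRow Unit (fun _ : κ × ι => β) * ((1 : Matrix κ κ R) ⊗ₖ O) = 0 := by
    rw [← replicateRow_vecMul, const_vecMul_one_kronecker hsum, replicateRow_zero]
  have mul_col : ((1 : Matrix κ κ R) ⊗ₖ O)ᵀ * replicateCol Unit (fun _ : κ × ι => β) = 0 := by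
    simpa only [transpose_mul, transpose_replicateRow, transpose_zero]
      using congrArg transpose row_mul
  have corner : replicateRow Unit (fun _ : Unit => α) * replicateCol Unit (fun _ => α)
      + replicateRow Unit (fun _ : κ × ι => β) * replicateCol Unit (fun _ : κ × ι => β)
      = (1 : Matrix Unit Unit R) := by
    ext
    simp [← hαβ, dotProduct, sq, mul_assoc]
  rw [facialMatrix, fromBlocks_transpose, fromBlocks_multiply, transpose_replicateCol,
    transpose_replicateCol, one_kronecker_transpose_mul_self horth, row_mul, mul_col, corner]
  simp only [transpose_zero, Matrix.zero_mul, Matrix.mul_zero, zero_add, add_zero, fromBlocks_one]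

theorem homogenizedConstraint_mul_facialMatrix [Ring R] {O : Matrix ι μ R} (hsum : 1 ᵥ* O = 0)
    {α β : R} (hα : α = Fintype.card ι * β) :
    homogenizedConstraint κ ι R * facialMatrix κ O α β = 0 := by
  have last_col : replicateCol Unit (-1 : κ → R) * replicateCol Unit (fun _ : Unit => α)
      + onePointPerSet κ ι R * replicateCol Unit (fun _ : κ × ι => β) = 0 := by
    ext
    rw [Matrix.add_apply, onePointPerSet_mul_apply]
    simp [mul_apply, hα]
  rw [homogenizedConstraint, facialMatrix, fromCols_mul_fromBlocks, last_col,
    onePointPerSet_mul_one_kronecker hsum, Matrix.mul_zero, add_zero, fromCols_zero]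

end FacialMatrix

/-- the explicit facial vector `V` built from the matrices `Ō` satisfies
`VᵀV = I` and `BV = 0`, where `A = I_k ⊗ e_nᵀ` and `B = [−e_k  A]`.
Column indices `j : Fin (n-1)` correspond to the mathematical index `j+1 ∈ {1,…,n−1}`. -/
theorem facial_vector_orthonormal_and_in_nullspace
    (k n : ℕ) (hk : 0 < k) (hn : 2 ≤ n)
    (A : Matrix (Fin k) (Fin k × Fin n) ℝ)
    (hA : ∀ i p, A i p = if p.1 = i then 1 else 0)
    (B : Matrix (Fin k) (Unit ⊕ Fin k × Fin n) ℝ)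
    (hB : ∀ i, B i (Sum.inl ()) = -1 ∧ ∀ p, B i (Sum.inr p) = A i p)
    (v vbar : Fin (n - 1) → ℝ)
    (hv : ∀ j, v j = 1 / Real.sqrt (((j : ℕ) + 1 : ℝ) + (((j : ℕ) + 1 : ℝ)) ^ 2))
    (hvbar : ∀ j, vbar j = (((j : ℕ) + 1 : ℝ)) / Real.sqrt (((j : ℕ) + 1 : ℝ) + (((j : ℕ) + 1 : ℝ)) ^ 2))
    (Obar : Matrix (Fin n) (Fin (n - 1)) ℝ)
    (hObar : ∀ i j, Obar i j =
      if (i : ℕ) = 0 then -v j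
      else if (j : ℕ) + 1 = (i : ℕ) then vbar j
      else if (i : ℕ) < (j : ℕ) + 1 then -v j
      else 0)
    (β α : ℝ)
    (hβ : β = -1 / Real.sqrt ((n : ℝ) ^ 2 + (n : ℝ) * (k : ℝ)))
    (hα : α = (n : ℝ) * β)
    (V : Matrix (Unit ⊕ Fin k × Fin n) ((Fin k × Fin (n - 1)) ⊕ Unit) ℝ)
    (hV : (∀ c : Fin k × Fin (n - 1), V (Sum.inl ()) (Sum.inl c) = 0) ∧
      V (Sum.inl ()) (Sum.inr ()) = α ∧
      (∀ (s : Fin k) (i : Fin n) (t : Fin k) (j : Fin (n - 1)),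
        V (Sum.inr (s, i)) (Sum.inl (t, j)) = if s = t then Obar i j else 0) ∧
      (∀ (s : Fin k) (i : Fin n), V (Sum.inr (s, i)) (Sum.inr ()) = β)) :
    Vᵀ * V = 1 ∧ B * V = 0 := by
  obtain ⟨hV_zero, hVα, hVO, hVβ⟩ := hV
  have hO : Obar = helmertMatrix n := by
    ext i j
    rw [hObar, hv, hvbar, helmertMatrix, of_apply, helmertContrast]
    split_ifs <;> first | omega | (push_cast; ring)
  have hV' : V = facialMatrix (Fin k) (helmertMatrix n) α β := by
    ext (_ | ⟨s, i⟩) (⟨t, j⟩ | _) <;>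
      simp [facialMatrix, hV_zero, hVα, hVO, hVβ, hO, one_apply]
  have hB' : B = homogenizedConstraint (Fin k) (Fin n) ℝ := by
    ext s (_ | p) <;> simp [homogenizedConstraint, onePointPerSet, hB, hA]
  have hβ_sq : β ^ 2 * ((n : ℝ) ^ 2 + n * k) = 1 := by
    rw [hβ, div_pow, Real.sq_sqrt (by positivity), neg_one_sq]
    exact one_div_mul_cancel (by positivity)
  subst hV' hB'
  refine ⟨facialMatrix_transpose_mul_self (helmertMatrix_transpose_mul_self n)
    (one_vecMul_helmertMatrix n) ?_, homogenizedConstraint_mul_facialMatrix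
    (one_vecMul_helmertMatrix n) ?_⟩
  · rw [hα, Fintype.card_fin, Fintype.card_fin]
    linear_combination hβ_sq
  · rw [hα, Fintype.card_fin]
end

section
/- Let N = kn, let A = I_k ⊗ e_nᵀ, B = [−e_k A], K = BᵀB ∈ S^{N+1}, and let J be the gangster index set, i.e., the set of pairs (i,j) with 1 ≤ i ≠ j ≤ N such that (AᵀA − I)_{ij} > 0 (the off-diagonal positions of the n×n diagonal blocks). Suppose Y ∈ S^{N+1} satisfies: Y ⪰ 0, rank(Y) = 1, Y_{00} = 1, K Y = 0, and Y_{ij} = 0 for all (i,j) ∈ J. Then arrow(Y) = e_0, i.e., Y_{ii} = Y_{0i} for all i = 1,…,N. -/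
/-!
Over an ordered ring `Bᵀ B Y = 0` already forces `B Y = 0`, because the columns `v` of `B Y` satisfy
`v ⬝ᵥ v = 0`. The entry of `B Y` in row `p.1` and column `p` is `-Y_{0p} + ∑ Y_{qp}`, with `q`
running over the block of `p`. The gangster constraint kills every term with `q ≠ p`.
-/

open Matrix

section LinearOrderedRing

variable {l m n R : Type*} [Fintype l] [Fintype m]
  [CommRing R] [LinearOrder R] [IsStrictOrderedRing R]

theorem transpose_mul_self_mul_eq_zero {A : Matrix l m R} {X : Matrix m n R} :
    Aᵀ * A * X = 0 ↔ A * X = 0 := by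
  refine ⟨fun h ↦ ?_, fun h ↦ by rw [Matrix.mul_assoc, h, Matrix.mul_zero]⟩
  have hgram : (A * X)ᵀ * (A * X) = 0 := by
    rw [transpose_mul, Matrix.mul_assoc, ← Matrix.mul_assoc Aᵀ, h, Matrix.mul_zero]
  ext i j
  have hcol : (A * X).col j ⬝ᵥ (A * X).col j = 0 := congrFun₂ hgram j j
  exact congrFun (dotProduct_self_eq_zero.mp hcol) i

end LinearOrderedRing

section BlockConstraints

variable (κ ι R : Type*) [DecidableEq κ]

/-- The matrix `A = I_k ⊗ e_nᵀ`, which sums the entries of each block. Coordinate `(i, a)` is the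
`a`-th one of block `i`; the row index is `κ` itself rather than the `κ × Unit` of
`Matrix.kronecker`. -/
def blockSumMatrix [Zero R] [One R] : Matrix κ (κ × ι) R :=
  of fun i p ↦ if p.1 = i then 1 else 0

/-- The matrix `B = [-e_k  A]`, whose kernel consists of the vectors all of whose block sums are
equal to the coordinate `0`, encoded as `Sum.inl ()`. -/
def blockConstraintMatrix [Ring R] : Matrix κ (Unit ⊕ κ × ι) R :=
  of fun i ↦ Sum.elim (fun _ ↦ -1) (blockSumMatrix κ ι R i)

/-- The gangster index set `J`: the positions of the lower-right block of `Y`, indexed without the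
coordinate `0`, at which `Y` is required to vanish. -/
def gangsterIndices [Fintype κ] [DecidableEq ι] [Ring R] [LT R] : Set ((κ × ι) × (κ × ι)) :=
  {pq |
    0 < ((blockSumMatrix κ ι R)ᵀ * blockSumMatrix κ ι R - 1 : Matrix (κ × ι) (κ × ι) R) pq.1 pq.2}

variable {κ ι R} [Fintype κ]

theorem mem_gangsterIndices [DecidableEq ι] [Ring R] [PartialOrder R] [IsStrictOrderedRing R]
    {p q : κ × ι} : (p, q) ∈ gangsterIndices κ ι R ↔ p.1 = q.1 ∧ p ≠ q := by
  have hgram : ((blockSumMatrix κ ι R)ᵀ * blockSumMatrix κ ι R) p q =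
      if p.1 = q.1 then 1 else 0 := by
    simp [blockSumMatrix, mul_apply, eq_comm]
  rw [gangsterIndices, Set.mem_ofPred_eq, Matrix.sub_apply, hgram, one_apply]
  by_cases hpq : p = q <;> by_cases hblock : p.1 = q.1 <;> simp_all

theorem blockConstraintMatrix_mul_apply [Fintype ι] [Ring R] {n : Type*}
    (Y : Matrix (Unit ⊕ κ × ι) n R) (i : κ) (j : n) :
    (blockConstraintMatrix κ ι R * Y) i j = -Y (.inl ()) j + ∑ a, Y (.inr (i, a)) j := by
  simp [blockConstraintMatrix, blockSumMatrix, mul_apply, Fintype.sum_prod_type_right]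

theorem arrow_redundant_for_rank_one_general [Fintype ι] [DecidableEq ι]
    [CommRing R] [LinearOrder R] [IsStrictOrderedRing R]
    {Y : Matrix (Unit ⊕ κ × ι) (Unit ⊕ κ × ι) R}
    (hKY : (blockConstraintMatrix κ ι R)ᵀ * blockConstraintMatrix κ ι R * Y = 0)
    (hgang : ∀ pq ∈ gangsterIndices κ ι R, Y (.inr pq.1) (.inr pq.2) = 0) (p : κ × ι) :
    Y (.inr p) (.inr p) = Y (.inl ()) (.inr p) := by
  have hBY : blockConstraintMatrix κ ι R * Y = 0 := transpose_mul_self_mul_eq_zero.mp hKY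
  have hblock : ∑ a, Y (.inr (p.1, a)) (.inr p) = Y (.inr p) (.inr p) :=
    Fintype.sum_eq_single p.2 fun a ha ↦
      hgang ((p.1, a), p) (mem_gangsterIndices.mpr ⟨rfl, fun h ↦ ha (congrArg Prod.snd h)⟩)
  have hentry : -Y (.inl ()) (.inr p) + Y (.inr p) (.inr p) = 0 := by
    rw [← hblock, ← blockConstraintMatrix_mul_apply, hBY, Matrix.zero_apply]
  exact (neg_add_eq_zero.mp hentry).symm

end BlockConstraints

/-- for a rank-one PSD matrix `Y` with `Y_{00} = 1`, `KY = 0` and the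
gangster entries zero, the arrow constraint `arrow(Y) = e_0` holds automatically,
i.e. `Y_{ii} = Y_{0i}` for all `i ≥ 1`.  The index `0` is `Sum.inl ()`. -/
theorem arrow_redundant_for_rank_one
    (k n : ℕ)
    (A : Matrix (Fin k) (Fin k × Fin n) ℝ)
    (hA : ∀ i p, A i p = if p.1 = i then 1 else 0)
    (B : Matrix (Fin k) (Unit ⊕ Fin k × Fin n) ℝ)
    (hB : ∀ i, B i (Sum.inl ()) = -1 ∧ ∀ p, B i (Sum.inr p) = A i p)
    (K : Matrix (Unit ⊕ Fin k × Fin n) (Unit ⊕ Fin k × Fin n) ℝ)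
    (hK : K = Bᵀ * B)
    (J : Set ((Fin k × Fin n) × (Fin k × Fin n)))
    (hJ : J = {pq | 0 < (Aᵀ * A - 1 : Matrix (Fin k × Fin n) (Fin k × Fin n) ℝ) pq.1 pq.2})
    (Y : Matrix (Unit ⊕ Fin k × Fin n) (Unit ⊕ Fin k × Fin n) ℝ)
    (hYpsd : Y.PosSemidef) (hYrank : Y.rank = 1)
    (hY00 : Y (Sum.inl ()) (Sum.inl ()) = 1)
    (hKY : K * Y = 0)
    (hgang : ∀ pq ∈ J, Y (Sum.inr pq.1) (Sum.inr pq.2) = 0) :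
    ∀ p : Fin k × Fin n, Y (Sum.inr p) (Sum.inr p) = Y (Sum.inl ()) (Sum.inr p) := by
  obtain rfl : A = blockSumMatrix (Fin k) (Fin n) ℝ := Matrix.ext hA
  obtain rfl : B = blockConstraintMatrix (Fin k) (Fin n) ℝ :=
    Matrix.ext fun i ↦ Sum.forall.mpr ⟨fun _ ↦ (hB i).1, (hB i).2⟩
  subst hK hJ
  exact arrow_redundant_for_rank_one_general hKY hgang
end

section
/- Let N = kn, m = N + 1 − k, A = I_k ⊗ e_nᵀ, B = [−e_k A], D ∈ S^N, D̂ = [[0,0],[0,D]] ∈ S^{N+1}, and let V ∈ ℝ^{(N+1)×m} have orthonormal columns with range(V) = null(B). Let p* = min { xᵀDx : Ax = e_k, x ∈ {0,1}^N } and suppose y_i = (1; x_i), i = 1,…,m, are linearly independent, where each x_i is optimal for this problem. Let Ŷ = (1/m) Σ_{i=1}^m y_i y_iᵀ and R̂ = Vᵀ Ŷ V. Then Ŷ = V R̂ Vᵀ with R̂ positive definite, and ⟨D̂, Ŷ⟩ = p*. Moreover, if x̄ ∈ {0,1}^N with A x̄ = e_k is feasible but not optimal (x̄ᵀD x̄ >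 p*), and ȳ = (1; x̄), then for all sufficiently small ε > 0 the matrix Z = Ŷ + ε(Ŷ − ȳ ȳᵀ) satisfies Z = V R_Z Vᵀ with R_Z := Vᵀ Z V positive definite, Z_{00} = 1, arrow(Z) = e_0, Z_{pq} = 0 for all gangster indices (p,q), and ⟨D̂, Z⟩ < p*. -/
open Matrix

/-!
Write `y = (1; x)` for the lift of a feasible `x`. The facial, corner, arrow and gangster
constraints are affine in `Y` and hold for every `y yᵀ`, so they hold for the mean `Ŷ` of the
`y i (y i)ᵀ` and for every point `Ŷ + ε (Ŷ - ȳ ȳᵀ)` of the line through `ȳ ȳᵀ` and `Ŷ`.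
Since `y i = V (Vᵀ y i)`, the `m` vectors `Vᵀ y i` are independent in dimension `m`, which makes
`R̂ = (1/m) ∑ (Vᵀ y i) (Vᵀ y i)ᵀ` positive definite. Positive definiteness is an open condition, so
the line may be followed a little beyond `Ŷ`, away from `ȳ ȳᵀ`; the linear objective is `p*` at `Ŷ`
and larger at `ȳ ȳᵀ`, hence falls below `p*` there.
-/

open Filter Topology

section PosDef

open scoped ComplexOrder

variable {𝕜 κ : Type*} [RCLike 𝕜] [Fintype κ]

lemma posDef_sum_vecMulVec_of_linearIndependent {w : κ → κ → 𝕜} (hw : LinearIndependent 𝕜 w) :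
    (∑ i, vecMulVec (w i) (star (w i))).PosDef := by
  classical
  have hsum : ∑ i, vecMulVec (w i) (star (w i)) = (of w)ᵀ * (of w)ᵀᴴ := by
    ext p q
    simp [Matrix.sum_apply, vecMulVec_apply, mul_apply]
  have hunit : IsUnit (of w) := linearIndependent_rows_iff_isUnit.1 hw
  rw [hsum]
  exact .mul_conjTranspose_self _ (vecMul_injective_iff_isUnit.2 ((isUnit_transpose _).2 hunit))

lemma posDef_of_forall_norm_eq_one {M : Matrix κ κ 𝕜} (hM : M.IsHermitian)
    (hpos : ∀ u : κ → 𝕜, ‖u‖ = 1 → 0 < RCLike.re (star u ⬝ᵥ (M *ᵥ u))) : M.PosDef := by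
  refine .of_dotProduct_mulVec_pos hM fun u hu => ?_
  rw [RCLike.pos_iff]
  refine ⟨?_, hM.im_star_dotProduct_mulVec_self u⟩
  have hnorm : 0 < ‖u‖ := norm_pos_iff.2 hu
  have hunit := hpos (((‖u‖⁻¹ : ℝ) : 𝕜) • u) (by simp [norm_smul, hnorm.ne'])
  simp only [star_smul, mulVec_smul, smul_dotProduct, dotProduct_smul, RCLike.star_def,
    RCLike.conj_ofReal, smul_eq_mul, RCLike.re_ofReal_mul] at hunit
  exact pos_of_mul_pos_right (pos_of_mul_pos_right hunit (by positivity)) (by positivity)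

/-- Compactness of the unit sphere makes the lower bound on the quadratic form uniform. -/
lemma eventually_posDef_of_continuousAt {κ X : Type*} [Finite κ] [TopologicalSpace X]
    {M : X → Matrix κ κ 𝕜} {x₀ : X} (hcont : ContinuousAt M x₀) (hherm : ∀ x, (M x).IsHermitian)
    (hpos : (M x₀).PosDef) : ∀ᶠ x in 𝓝 x₀, (M x).PosDef := by
  have := Fintype.ofFinite κ
  have hsphere : ∀ᶠ x in 𝓝 x₀, ∀ u ∈ Metric.sphere (0 : κ → 𝕜) 1,
      0 < RCLike.re (star u ⬝ᵥ (M x *ᵥ u)) := by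
    refine (isCompact_sphere _ _).eventually_forall_of_forall_eventually fun u hu => ?_
    have hquad : Continuous fun z : Matrix κ κ 𝕜 × (κ → 𝕜) =>
        RCLike.re (star z.2 ⬝ᵥ (z.1 *ᵥ z.2)) := by
      fun_prop
    have hu0 : u ≠ 0 := ne_zero_of_mem_unit_sphere ⟨u, hu⟩
    have hlimit : Tendsto (Prod.map M id) (𝓝 (x₀, u)) (𝓝 (M x₀, u)) :=
      hcont.prodMap continuousAt_id
    exact ((hquad.tendsto _).comp hlimit).eventually_const_lt
      (RCLike.pos_iff.1 (hpos.dotProduct_mulVec_pos hu0)).1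
  filter_upwards [hsphere] with x hx
  exact posDef_of_forall_norm_eq_one (hherm x) fun u hu => hx u (by simpa using hu)

end PosDef

section Compression

variable {R N κ : Type*} [CommSemiring R] [Fintype N]

lemma mulVec_transpose_mulVec_of_mem_range [Fintype κ] [DecidableEq κ] {V : Matrix N κ R}
    (hV : Vᵀ * V = 1) {y : N → R} (hy : ∃ w, y = V *ᵥ w) : V *ᵥ (Vᵀ *ᵥ y) = y := by
  obtain ⟨w, rfl⟩ := hy
  rw [mulVec_mulVec _ Vᵀ, hV, one_mulVec]

lemma transpose_mul_vecMulVec_self_mul (V : Matrix N κ R) (y : N → R) :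
    Vᵀ * vecMulVec y y * V = vecMulVec (Vᵀ *ᵥ y) (Vᵀ *ᵥ y) := by
  rw [mul_vecMulVec, vecMulVec_mul, mulVec_transpose]

lemma posDef_compress_mean_vecMulVec [Fintype κ] [Nonempty κ] {V : Matrix N κ ℝ}
    {y : κ → N → ℝ} (hli : LinearIndependent ℝ y) (hy : ∀ i, V *ᵥ (Vᵀ *ᵥ y i) = y i) :
    (Vᵀ * ((1 / (Fintype.card κ : ℝ)) • ∑ i, vecMulVec (y i) (y i)) * V).PosDef := by
  have hw : LinearIndependent ℝ fun i => Vᵀ *ᵥ y i := by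
    refine LinearIndependent.of_comp V.mulVecLin ?_
    simpa [Function.comp_def, hy] using hli
  have hcompress : Vᵀ * ((1 / (Fintype.card κ : ℝ)) • ∑ i, vecMulVec (y i) (y i)) * V =
      (1 / (Fintype.card κ : ℝ)) • ∑ i, vecMulVec (Vᵀ *ᵥ y i) (Vᵀ *ᵥ y i) := by
    simp only [Matrix.mul_smul, Matrix.smul_mul, Matrix.mul_sum, Matrix.sum_mul,
      transpose_mul_vecMulVec_self_mul]
  rw [hcompress]
  exact (posDef_sum_vecMulVec_of_linearIndependent hw).smul (by positivity)

lemma exists_forall_posDef_compress_add_smul [Finite κ] {V : Matrix N κ ℝ}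
    {Y W : Matrix N N ℝ} (hY : Y.IsSymm) (hW : W.IsSymm) (hpos : (Vᵀ * Y * V).PosDef) :
    ∃ ε₀ > (0 : ℝ), ∀ ε, 0 < ε → ε < ε₀ → (Vᵀ * (Y + ε • W) * V).PosDef := by
  have hev : ∀ᶠ ε : ℝ in 𝓝 0, (Vᵀ * (Y + ε • W) * V).PosDef := by
    refine eventually_posDef_of_continuousAt (by fun_prop) (fun ε => ?_) (by simpa using hpos)
    exact isHermitian_conjTranspose_mul_mul V (hY.add (hW.smul ε))
  obtain ⟨ε₀, hε₀, hball⟩ := Metric.eventually_nhds_iff.1 hev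
  exact ⟨ε₀, hε₀, fun ε h0 hlt => hball (by simpa [abs_of_pos h0] using hlt)⟩

end Compression

section Affine

lemma mean_mem_affineSubspace {𝕜 E κ : Type*} [Field 𝕜] [LinearOrder 𝕜] [IsStrictOrderedRing 𝕜]
    [AddCommGroup E] [Module 𝕜 E] [Fintype κ] [Nonempty κ] {S : AffineSubspace 𝕜 E} {y : κ → E}
    (hy : ∀ i, y i ∈ S) : (1 / (Fintype.card κ : 𝕜)) • ∑ i, y i ∈ S := by
  rw [Finset.smul_sum]
  exact S.convex.sum_mem (fun _ _ => by positivity) (by simp) fun i _ => hy i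

lemma add_smul_sub_mem_affineSubspace {R E : Type*} [Ring R] [AddCommGroup E] [Module R E]
    {S : AffineSubspace R E} {y z : E} (hy : y ∈ S) (hz : z ∈ S) (c : R) :
    y + c • (y - z) ∈ S := by
  simpa [add_comm] using S.smul_vsub_vadd_mem c hy hz hy

end Affine

section Trace

variable {𝕜 N : Type*} [Field 𝕜] [Fintype N]

lemma trace_mul_mean [CharZero 𝕜] {κ : Type*} [Fintype κ] [Nonempty κ] {C : Matrix N N 𝕜}
    {Y : κ → Matrix N N 𝕜} {t : 𝕜} (hY : ∀ i, (C * Y i).trace = t) :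
    (C * ((1 / (Fintype.card κ : 𝕜)) • ∑ i, Y i)).trace = t := by
  simp [Matrix.mul_sum, trace_sum, hY]

lemma trace_mul_add_smul_sub_lt [LinearOrder 𝕜] [IsStrictOrderedRing 𝕜] {C Y W : Matrix N N 𝕜}
    {ε : 𝕜} (hε : 0 < ε) (hlt : (C * Y).trace < (C * W).trace) :
    (C * (Y + ε • (Y - W))).trace < (C * Y).trace := by
  simp only [Matrix.mul_add, Matrix.mul_smul, Matrix.mul_sub, trace_add, trace_smul, trace_sub,
    smul_eq_mul]
  linarith [mul_pos hε (sub_pos.2 hlt)]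

end Trace

lemma mul_eq_zero_of_sum_eq_one {R α : Type*} [Semiring R] [LinearOrder R]
    [IsStrictOrderedRing R] [Fintype α] {f : α → R} (hbin : ∀ i, f i = 0 ∨ f i = 1)
    (hsum : ∑ i, f i = 1) {i j : α} (hij : i ≠ j) : f i * f j = 0 := by
  classical
  have hnonneg : ∀ l, 0 ≤ f l := fun l => by rcases hbin l with h | h <;> simp [h]
  have hpair : f i + f j ≤ 1 := by
    rw [← hsum, ← Finset.sum_pair hij]
    exact Finset.sum_le_univ_sum_of_nonneg hnonneg
  rcases hbin i with hi | hi
  · simp [hi]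
  · have hj : f j ≤ 0 := by simpa [hi] using hpair
    simp [le_antisymm hj (hnonneg j)]

/-- The lift `(1; x)` of `x`; the index `0` of the paper is `Sum.inl ()`. -/
def liftVec {P : Type*} (x : P → ℝ) : Unit ⊕ P → ℝ := Sum.elim (fun _ => 1) x

/-- The rank-one matrix `y yᵀ` of the lift `y = (1; x)`. -/
def liftMatrix {P : Type*} (x : P → ℝ) : Matrix (Unit ⊕ P) (Unit ⊕ P) ℝ :=
  vecMulVec (liftVec x) (liftVec x)

lemma isSymm_liftMatrix {P : Type*} (x : P → ℝ) : (liftMatrix x).IsSymm :=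
  transpose_vecMulVec _ _

lemma trace_fromBlocks_mul_liftMatrix {P : Type*} [Fintype P] (D : Matrix P P ℝ) (x : P → ℝ) :
    (fromBlocks 0 0 0 D * liftMatrix x).trace = x ⬝ᵥ (D *ᵥ x) := by
  rw [liftMatrix, mul_vecMulVec, trace_vecMulVec, dotProduct_comm, liftVec, fromBlocks_mulVec]
  simp

section Relaxation

variable {ι α κ : Type*}

/-- `x` is the indicator of a choice of one element in each block `{s} × α`. -/
def IsSelection [Fintype α] (x : ι × α → ℝ) : Prop :=
  (∀ p, x p = 0 ∨ x p = 1) ∧ ∀ s, ∑ j, x (s, j) = 1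

/-- The equality constraints of the facially reduced relaxation: `Y = V (Vᵀ Y V) Vᵀ`,
`Y₀₀ = 1`, `arrow Y = e₀`, and vanishing at the gangster indices. -/
def relaxationSubspace [Fintype ι] [Fintype α] [Fintype κ] (V : Matrix (Unit ⊕ ι × α) κ ℝ) :
    AffineSubspace ℝ (Matrix (Unit ⊕ ι × α) (Unit ⊕ ι × α) ℝ) where
  carrier := {Y | Y = V * (Vᵀ * Y * V) * Vᵀ ∧ Y (Sum.inl ()) (Sum.inl ()) = 1 ∧
    (∀ p, Y (Sum.inr p) (Sum.inr p) = Y (Sum.inl ()) (Sum.inr p)) ∧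
    ∀ s i j, i ≠ j → Y (Sum.inr (s, i)) (Sum.inr (s, j)) = 0}
  smul_vsub_vadd_mem' := by
    rintro c Y₁ Y₂ Y₃ ⟨hface₁, hcorner₁, harrow₁, hgang₁⟩ ⟨hface₂, hcorner₂, harrow₂, hgang₂⟩
      ⟨hface₃, hcorner₃, harrow₃, hgang₃⟩
    refine ⟨?_, by simp [hcorner₁, hcorner₂, hcorner₃], fun p => ?_, fun s i j hij => ?_⟩
    · simp only [vsub_eq_sub, vadd_eq_add, Matrix.mul_add, Matrix.add_mul, Matrix.mul_sub,
        Matrix.sub_mul, Matrix.mul_smul, Matrix.smul_mul, ← hface₁, ← hface₂, ← hface₃]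
    · simp [harrow₁, harrow₂, harrow₃]
    · simp [hgang₁ s i j hij, hgang₂ s i j hij, hgang₃ s i j hij]

variable [Fintype ι] [Fintype α] [Fintype κ]

lemma isSelection_of_mulVec_eq_one [DecidableEq ι] {A : Matrix ι (ι × α) ℝ}
    (hA : ∀ i p, A i p = if p.1 = i then 1 else 0) {x : ι × α → ℝ}
    (hbin : ∀ p, x p = 0 ∨ x p = 1) (hfeas : A *ᵥ x = fun _ => 1) : IsSelection x := by
  refine ⟨hbin, fun s => ?_⟩
  have hrow := congrFun hfeas s
  simp only [mulVec, dotProduct, hA, Fintype.sum_prod_type_right] at hrow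
  simpa using hrow

lemma mulVec_liftVec_eq_zero {σ P : Type*} [Fintype P] {A : Matrix σ P ℝ}
    {B : Matrix σ (Unit ⊕ P) ℝ} (hB : ∀ i, B i (Sum.inl ()) = -1 ∧ ∀ p, B i (Sum.inr p) = A i p)
    {x : P → ℝ} (hfeas : A *ᵥ x = fun _ => 1) : B *ᵥ liftVec x = 0 := by
  funext i
  have hrow : ∑ p, A i p * x p = 1 := congrFun hfeas i
  simp [liftVec, mulVec, dotProduct, hB, hrow]

lemma liftMatrix_mem_relaxationSubspace {V : Matrix (Unit ⊕ ι × α) κ ℝ} {x : ι × α → ℝ}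
    (hx : IsSelection x) (hV : V *ᵥ (Vᵀ *ᵥ liftVec x) = liftVec x) :
    liftMatrix x ∈ relaxationSubspace V := by
  refine ⟨?_, by simp [liftMatrix, liftVec, vecMulVec_apply], fun p => ?_, fun s i j hij => ?_⟩
  · rw [liftMatrix, transpose_mul_vecMulVec_self_mul, mul_vecMulVec, vecMulVec_mul,
      vecMul_transpose, hV]
  · rcases hx.1 p with h | h <;> simp [liftMatrix, liftVec, vecMulVec_apply, h]
  · exact mul_eq_zero_of_sum_eq_one (fun l => hx.1 (s, l)) (hx.2 s) hij

theorem dnn_relaxation_duality_gap_from_multiple_optima_general [Nonempty κ] [DecidableEq ι]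
    [DecidableEq κ]
    {A : Matrix ι (ι × α) ℝ} (hA : ∀ i p, A i p = if p.1 = i then 1 else 0)
    {B : Matrix ι (Unit ⊕ ι × α) ℝ}
    (hB : ∀ i, B i (Sum.inl ()) = -1 ∧ ∀ p, B i (Sum.inr p) = A i p)
    {V : Matrix (Unit ⊕ ι × α) κ ℝ} (hVorth : Vᵀ * V = 1)
    (hVrange : ∀ u, B *ᵥ u = 0 → ∃ w, u = V *ᵥ w)
    (D : Matrix (ι × α) (ι × α) ℝ) {t : ℝ} {x : κ → ι × α → ℝ}
    (hfeas : ∀ i, A *ᵥ x i = fun _ => 1) (hbin : ∀ i p, x i p = 0 ∨ x i p = 1)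
    (hval : ∀ i, x i ⬝ᵥ (D *ᵥ x i) = t) (hli : LinearIndependent ℝ fun i => liftVec (x i))
    {Y : Matrix (Unit ⊕ ι × α) (Unit ⊕ ι × α) ℝ}
    (hY : Y = (1 / (Fintype.card κ : ℝ)) • ∑ i, liftMatrix (x i)) :
    Y = V * (Vᵀ * Y * V) * Vᵀ ∧ (Vᵀ * Y * V).PosDef ∧ (fromBlocks 0 0 0 D * Y).trace = t ∧
      ∀ xbar : ι × α → ℝ, (∀ p, xbar p = 0 ∨ xbar p = 1) → (A *ᵥ xbar = fun _ => 1) →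
        t < xbar ⬝ᵥ (D *ᵥ xbar) →
        ∃ ε₀ > (0 : ℝ), ∀ ε : ℝ, 0 < ε → ε < ε₀ →
          ∀ Z : Matrix (Unit ⊕ ι × α) (Unit ⊕ ι × α) ℝ, Z = Y + ε • (Y - liftMatrix xbar) →
            Z = V * (Vᵀ * Z * V) * Vᵀ ∧ (Vᵀ * Z * V).PosDef ∧
              Z (Sum.inl ()) (Sum.inl ()) = 1 ∧
              (∀ p, Z (Sum.inr p) (Sum.inr p) = Z (Sum.inl ()) (Sum.inr p)) ∧
              (∀ s i j, i ≠ j → Z (Sum.inr (s, i)) (Sum.inr (s, j)) = 0) ∧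
              (fromBlocks 0 0 0 D * Z).trace < t := by
  have hfix {x' : ι × α → ℝ} (hx' : A *ᵥ x' = fun _ => 1) :
      V *ᵥ (Vᵀ *ᵥ liftVec x') = liftVec x' :=
    mulVec_transpose_mulVec_of_mem_range hVorth (hVrange _ (mulVec_liftVec_eq_zero hB hx'))
  have hmem {x' : ι × α → ℝ} (hb : ∀ p, x' p = 0 ∨ x' p = 1) (hx' : A *ᵥ x' = fun _ => 1) :
      liftMatrix x' ∈ relaxationSubspace V :=
    liftMatrix_mem_relaxationSubspace (isSelection_of_mulVec_eq_one hA hb hx') (hfix hx')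
  have hYmem : Y ∈ relaxationSubspace V :=
    hY ▸ mean_mem_affineSubspace fun i => hmem (hbin i) (hfeas i)
  have hpos : (Vᵀ * Y * V).PosDef :=
    hY ▸ posDef_compress_mean_vecMulVec hli fun i => hfix (hfeas i)
  have htrace : (fromBlocks 0 0 0 D * Y).trace = t :=
    hY ▸ trace_mul_mean fun i => (trace_fromBlocks_mul_liftMatrix D (x i)).trans (hval i)
  have hsymm : Y.IsSymm := by
    simp [hY, IsSymm, transpose_sum, (isSymm_liftMatrix _).eq]
  refine ⟨hYmem.1, hpos, htrace, fun xbar hb hx hlt => ?_⟩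
  obtain ⟨ε₀, hε₀, hposZ⟩ :=
    exists_forall_posDef_compress_add_smul hsymm (hsymm.sub (isSymm_liftMatrix xbar)) hpos
  refine ⟨ε₀, hε₀, fun ε h0 hε Z hZ => ?_⟩
  obtain ⟨hface, hcorner, harrow, hgangster⟩ : Z ∈ relaxationSubspace V :=
    hZ ▸ add_smul_sub_mem_affineSubspace hYmem (hmem hb hx) ε
  have hless : (fromBlocks 0 0 0 D * Z).trace < (fromBlocks 0 0 0 D * Y).trace :=
    hZ ▸ trace_mul_add_smul_sub_lt h0 (by rwa [htrace, trace_fromBlocks_mul_liftMatrix])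
  exact ⟨hface, hZ ▸ hposZ ε h0 hε, hcorner, harrow, hgangster, hless.trans_eq htrace⟩

end Relaxation

/-- duality gap construction for the facially reduced DNN relaxation of
the BCQP `min xᵀDx, Ax = e, x ∈ {0,1}^N`: from `m = N+1−k` linearly independent lifted
optimal solutions one builds `Ŷ = VR̂Vᵀ` with `R̂ ≻ 0` and `⟨D̂,Ŷ⟩ = p*`; and from a
feasible non-optimal `x̄`, the perturbations `Z = Ŷ + ε(Ŷ − ȳȳᵀ)` are feasible for the
relaxation (with `R_Z = VᵀZV ≻ 0`, arrow and gangster constraints satisfied) and have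
objective value below `p*`.  The index `0` is `Sum.inl ()`. -/
theorem dnn_relaxation_duality_gap_from_multiple_optima
    (k n : ℕ) (hk : 0 < k) (hn : 0 < n)
    (A : Matrix (Fin k) (Fin k × Fin n) ℝ)
    (hA : ∀ i p, A i p = if p.1 = i then 1 else 0)
    (B : Matrix (Fin k) (Unit ⊕ Fin k × Fin n) ℝ)
    (hB : ∀ i, B i (Sum.inl ()) = -1 ∧ ∀ p, B i (Sum.inr p) = A i p)
    (V : Matrix (Unit ⊕ Fin k × Fin n) (Fin (k * n + 1 - k)) ℝ)
    (hVorth : Vᵀ * V = 1)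
    (hVrange : ∀ u : Unit ⊕ Fin k × Fin n → ℝ,
      B *ᵥ u = 0 ↔ ∃ w : Fin (k * n + 1 - k) → ℝ, u = V *ᵥ w)
    (D : Matrix (Fin k × Fin n) (Fin k × Fin n) ℝ) (hD : D.IsSymm)
    (Dhat : Matrix (Unit ⊕ Fin k × Fin n) (Unit ⊕ Fin k × Fin n) ℝ)
    (hDhat : Dhat = Matrix.fromBlocks 0 0 0 D)
    (pstar : ℝ)
    (hpstar : IsLeast {t : ℝ | ∃ x' : Fin k × Fin n → ℝ,
      (A *ᵥ x' = fun _ => 1) ∧ (∀ p, x' p = 0 ∨ x' p = 1) ∧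
        t = x' ⬝ᵥ (D *ᵥ x')} pstar)
    (x : Fin (k * n + 1 - k) → (Fin k × Fin n → ℝ))
    (hfeas : ∀ i, A *ᵥ x i = fun _ => 1)
    (hbin : ∀ i p, x i p = 0 ∨ x i p = 1)
    (hopt : ∀ i, x i ⬝ᵥ (D *ᵥ x i) = pstar)
    (hli : LinearIndependent ℝ fun i => Sum.elim (fun _ : Unit => (1 : ℝ)) (x i))
    (Yhat : Matrix (Unit ⊕ Fin k × Fin n) (Unit ⊕ Fin k × Fin n) ℝ)
    (hYhat : Yhat = (1 / ((k * n + 1 - k : ℕ) : ℝ)) •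
      ∑ i, vecMulVec (Sum.elim (fun _ : Unit => (1 : ℝ)) (x i)) (Sum.elim (fun _ : Unit => (1 : ℝ)) (x i)))
    (Rhat : Matrix (Fin (k * n + 1 - k)) (Fin (k * n + 1 - k)) ℝ)
    (hRhat : Rhat = Vᵀ * Yhat * V) :
    Yhat = V * Rhat * Vᵀ ∧ Rhat.PosDef ∧ (Dhat * Yhat).trace = pstar ∧
      ∀ xbar : Fin k × Fin n → ℝ, (∀ p, xbar p = 0 ∨ xbar p = 1) →
        (A *ᵥ xbar = fun _ => 1) → pstar < xbar ⬝ᵥ (D *ᵥ xbar) →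
        ∃ ε₀ > (0 : ℝ), ∀ ε : ℝ, 0 < ε → ε < ε₀ →
          ∀ Z : Matrix (Unit ⊕ Fin k × Fin n) (Unit ⊕ Fin k × Fin n) ℝ,
            Z = Yhat + ε • (Yhat -
              vecMulVec (Sum.elim (fun _ : Unit => (1 : ℝ)) xbar) (Sum.elim (fun _ : Unit => (1 : ℝ)) xbar)) →
            Z = V * (Vᵀ * Z * V) * Vᵀ ∧ (Vᵀ * Z * V).PosDef ∧
              Z (Sum.inl ()) (Sum.inl ()) = 1 ∧
              (∀ p : Fin k × Fin n, Z (Sum.inr p) (Sum.inr p) = Z (Sum.inl ()) (Sum.inr p)) ∧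
              (∀ (s : Fin k) (i j : Fin n), i ≠ j → Z (Sum.inr (s, i)) (Sum.inr (s, j)) = 0) ∧
              (Dhat * Z).trace < pstar := by
  have : Nonempty (Fin (k * n + 1 - k)) :=
    Fin.pos_iff_nonempty.1 (by have := Nat.le_mul_of_pos_right k hn; omega)
  subst hDhat hRhat
  exact dnn_relaxation_duality_gap_from_multiple_optima_general hA hB hVorth
    (fun u => (hVrange u).1) D hfeas hbin hopt hli (by rwa [Fintype.card_fin])
end

section
/- Let V ∈ ℝ^{p×m} satisfy VᵀV = I_m, and let M ∈ S^p. Then for every R ∈ S^m, ‖M − V R Vᵀ‖_F² = ‖Vᵀ M V − R‖_F² + ‖M‖_F² − ‖Vᵀ M V‖_F². Consequently, for any subset S ⊆ S^m, a matrix R ∈ S minimizes ‖M − V R Vᵀ‖_F over S if and only if it minimizes ‖R − Vᵀ M V‖_F over S. -/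
/-!
For the inner product `⟨A, B⟩ = tr(AᴴB)`, the map `R ↦ U R Vᴴ` is an isometry when `U` and `V` have
orthonormal columns, and its adjoint is `M ↦ Uᴴ M V`. Hence the expansions of `‖M - U R Vᴴ‖²` and
`‖Uᴴ M V - R‖²` have the same cross term and the same quadratic term in `R`, so the two squared
distances differ by a constant and have the same minimizers.
-/

open Matrix

/-- The Frobenius norm of a real matrix. -/
noncomputable def frobNorm {p m : ℕ} (A : Matrix (Fin p) (Fin m) ℝ) : ℝ :=
  Real.sqrt (∑ i, ∑ j, A i j ^ 2)

theorem trace_conjTranspose_mul_mul_mul_conjTranspose {k l m n α : Type*}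
    [Fintype k] [Fintype l] [Fintype m] [Fintype n] [CommSemiring α] [StarRing α]
    (M : Matrix m n α) (U : Matrix m k α) (R : Matrix k l α) (V : Matrix n l α) :
    (Mᴴ * (U * R * Vᴴ)).trace = ((Uᴴ * M * V)ᴴ * R).trace := by
  rw [← Matrix.mul_assoc, Matrix.trace_mul_comm]
  simp only [conjTranspose_mul, conjTranspose_conjTranspose, Matrix.mul_assoc]

section Frobenius

open scoped Matrix.Norms.Frobenius

variable {k l m n 𝕜 : Type*} [Fintype k] [Fintype l] [Fintype m] [Fintype n] [RCLike 𝕜]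

theorem frobNorm_eq_norm {p m : ℕ} (A : Matrix (Fin p) (Fin m) ℝ) : frobNorm A = ‖A‖ := by
  simp only [frobNorm, frobenius_norm_def, Real.sqrt_eq_rpow, Real.rpow_two, Real.norm_eq_abs,
    sq_abs]

theorem frobenius_norm_sq_eq_re_trace (A : Matrix m n 𝕜) :
    ‖A‖ ^ 2 = RCLike.re (Aᴴ * A).trace := by
  rw [frobenius_norm_def, ← Real.sqrt_eq_rpow, Real.sq_sqrt (by positivity), Finset.sum_comm]
  simp only [Real.rpow_two, trace, diag_apply, mul_apply, conjTranspose_apply, map_sum,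
    RCLike.star_def, RCLike.conj_mul, ← RCLike.ofReal_pow, RCLike.ofReal_re]

theorem frobenius_norm_sub_sq (A B : Matrix m n 𝕜) :
    ‖A - B‖ ^ 2 = ‖A‖ ^ 2 - 2 * RCLike.re (Aᴴ * B).trace + ‖B‖ ^ 2 := by
  have re_trace_comm : RCLike.re (Bᴴ * A).trace = RCLike.re (Aᴴ * B).trace := by
    rw [← RCLike.conj_re, ← RCLike.star_def, ← trace_conjTranspose, conjTranspose_mul,
      conjTranspose_conjTranspose]
  simp only [frobenius_norm_sq_eq_re_trace, conjTranspose_sub, Matrix.sub_mul, Matrix.mul_sub,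
    trace_sub, map_sub, re_trace_comm]
  ring

theorem frobenius_norm_mul_left [DecidableEq k] {U : Matrix m k 𝕜} (hU : Uᴴ * U = 1)
    (A : Matrix k n 𝕜) : ‖U * A‖ = ‖A‖ := by
  have gram_eq : (U * A)ᴴ * (U * A) = Aᴴ * A := by
    rw [conjTranspose_mul, Matrix.mul_assoc, ← Matrix.mul_assoc Uᴴ, hU, Matrix.one_mul]
  rw [← sq_eq_sq₀ (norm_nonneg _) (norm_nonneg _), frobenius_norm_sq_eq_re_trace, gram_eq,
    frobenius_norm_sq_eq_re_trace]

theorem frobenius_norm_mul_conjTranspose_right [DecidableEq l] {V : Matrix n l 𝕜}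
    (hV : Vᴴ * V = 1) (A : Matrix m l 𝕜) : ‖A * Vᴴ‖ = ‖A‖ := by
  rw [← frobenius_norm_conjTranspose, conjTranspose_mul, conjTranspose_conjTranspose,
    frobenius_norm_mul_left hV, frobenius_norm_conjTranspose]

variable [DecidableEq k] [DecidableEq l] {U : Matrix m k 𝕜} {V : Matrix n l 𝕜}

theorem frobenius_norm_sub_mul_mul_conjTranspose_sq (hU : Uᴴ * U = 1) (hV : Vᴴ * V = 1)
    (M : Matrix m n 𝕜) (R : Matrix k l 𝕜) :
    ‖M - U * R * Vᴴ‖ ^ 2 = ‖Uᴴ * M * V - R‖ ^ 2 + ‖M‖ ^ 2 - ‖Uᴴ * M * V‖ ^ 2 := by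
  rw [frobenius_norm_sub_sq, frobenius_norm_sub_sq, trace_conjTranspose_mul_mul_mul_conjTranspose,
    frobenius_norm_mul_conjTranspose_right hV, frobenius_norm_mul_left hU]
  ring

theorem frobenius_norm_sub_mul_mul_conjTranspose_le_iff (hU : Uᴴ * U = 1) (hV : Vᴴ * V = 1)
    (M : Matrix m n 𝕜) (R R' : Matrix k l 𝕜) :
    ‖M - U * R * Vᴴ‖ ≤ ‖M - U * R' * Vᴴ‖ ↔ ‖R - Uᴴ * M * V‖ ≤ ‖R' - Uᴴ * M * V‖ := by
  rw [← sq_le_sq₀ (norm_nonneg _) (norm_nonneg _),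
    frobenius_norm_sub_mul_mul_conjTranspose_sq hU hV,
    frobenius_norm_sub_mul_mul_conjTranspose_sq hU hV, sub_le_sub_iff_right, add_le_add_iff_right,
    sq_le_sq₀ (norm_nonneg _) (norm_nonneg _), norm_sub_rev _ R, norm_sub_rev _ R']

theorem frobenius_reduction_identity_and_minimizers_general (hU : Uᴴ * U = 1) (hV : Vᴴ * V = 1)
    (M : Matrix m n 𝕜) :
    (∀ R : Matrix k l 𝕜,
      ‖M - U * R * Vᴴ‖ ^ 2 = ‖Uᴴ * M * V - R‖ ^ 2 + ‖M‖ ^ 2 - ‖Uᴴ * M * V‖ ^ 2) ∧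
    ∀ (S : Set (Matrix k l 𝕜)) (R : Matrix k l 𝕜),
      IsMinOn (fun R' ↦ ‖M - U * R' * Vᴴ‖) S R ↔ IsMinOn (fun R' ↦ ‖R' - Uᴴ * M * V‖) S R :=
  ⟨frobenius_norm_sub_mul_mul_conjTranspose_sq hU hV M, fun _ R ↦ forall₂_congr fun R' _ ↦
    frobenius_norm_sub_mul_mul_conjTranspose_le_iff hU hV M R R'⟩

end Frobenius

/-- for `V` with orthonormal columns and `M ∈ S^p`,
`‖M − VRVᵀ‖_F² = ‖VᵀMV − R‖_F² + ‖M‖_F² − ‖VᵀMV‖_F²` for every `R ∈ S^m`; hence over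
any subset `S ⊆ S^m`, `R` minimizes `‖M − VRVᵀ‖_F` iff it minimizes `‖R − VᵀMV‖_F`. -/
theorem frobenius_reduction_identity_and_minimizers
    (p m : ℕ) (V : Matrix (Fin p) (Fin m) ℝ) (hV : Vᵀ * V = 1)
    (M : Matrix (Fin p) (Fin p) ℝ) (hM : M.IsSymm) :
    (∀ R : Matrix (Fin m) (Fin m) ℝ, R.IsSymm →
      frobNorm (M - V * R * Vᵀ) ^ 2 =
        frobNorm (Vᵀ * M * V - R) ^ 2 + frobNorm M ^ 2 - frobNorm (Vᵀ * M * V) ^ 2) ∧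
    ∀ S : Set (Matrix (Fin m) (Fin m) ℝ), (∀ R ∈ S, R.IsSymm) →
      ∀ R ∈ S,
        ((∀ R' ∈ S, frobNorm (M - V * R * Vᵀ) ≤ frobNorm (M - V * R' * Vᵀ)) ↔
          (∀ R' ∈ S, frobNorm (R - Vᵀ * M * V) ≤ frobNorm (R' - Vᵀ * M * V))) := by
  simp only [frobNorm_eq_norm, ← conjTranspose_eq_transpose_of_trivial] at hV ⊢
  have general := frobenius_reduction_identity_and_minimizers_general hV hV M
  exact ⟨fun R _ ↦ general.1 R, fun S _ R _ ↦ general.2 S R⟩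
end
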